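/- Holt-type system dual to the second Hénon–Heiles system. Let α ≠ 0, β ∈ ℝ, x̃ > 0, and define H(x,y,p_x,p_y) = (1/2)(p_x² + p_y²) + (α²/2)·x·(2x² + y²) + β. The substitution x = (3/2)x̃^{2/3}, p_x = p̃_x·x̃^{1/3}, y = √(2/3)·p̃_y/α, p_y = −√(3/2)·α·ỹ is a canonical transformation (it satisfies {p̃_x,x̃} = {p̃_y,ỹ} = 1 and the vanishing of all other basic brackets with respect to the canonical Poisson bracket in (x̃,ỹ,p̃_x,p̃_y)), and under it x̃^{−2/3}·H = (1/2)(p̃_x² + p̃_y²) + (3α²/4)·x̃^{−2/3}·((9/2)x̃² + ỹ²) + β·x̃^{−2/3}. -/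

import Mathlib

/-- The canonical Poisson bracket of two functions of `(x, y, pₓ, p_y)` on `ℝ⁴`:
`{F,G} = ∂F/∂pₓ·∂G/∂x − ∂F/∂x·∂G/∂pₓ + ∂F/∂p_y·∂G/∂y − ∂F/∂y·∂G/∂p_y`. -/
noncomputable def pb (F G : ℝ → ℝ → ℝ → ℝ → ℝ) (x y px py : ℝ) : ℝ :=
    deriv (fun s => F x y s py) px * deriv (fun s => G s y px py) x
  - deriv (fun s => F s y px py) x * deriv (fun s => G x y s py) px
  + deriv (fun s => F x y px s) py * deriv (fun s => G x s px py) y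
  - deriv (fun s => F x s px py) y * deriv (fun s => G x y px s) py

/-- The physical variables of the second Hénon–Heiles system expressed through
the canonical variables `(x̃, ỹ, p̃ₓ, p̃_y)` of the Holt-type system. -/
noncomputable def X : ℝ → ℝ → ℝ → ℝ → ℝ := fun xt _ _ _ => (3 / 2) * xt ^ ((2 : ℝ) / 3)
noncomputable def PX : ℝ → ℝ → ℝ → ℝ → ℝ := fun xt _ pxt _ => pxt * xt ^ ((1 : ℝ) / 3)
noncomputable def Y (α : ℝ) : ℝ → ℝ → ℝ → ℝ → ℝ :=
  fun _ _ _ pyt => Real.sqrt (2 / 3) * pyt / α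
noncomputable def PY (α : ℝ) : ℝ → ℝ → ℝ → ℝ → ℝ :=
  fun _ yt _ _ => -(Real.sqrt (3 / 2) * α * yt)

/-- The second integrable Hénon–Heiles Hamiltonian. -/
noncomputable def Ham (α β : ℝ) (x y px py : ℝ) : ℝ :=
  (1 / 2) * (px ^ 2 + py ^ 2) + (α ^ 2 / 2) * x * (2 * x ^ 2 + y ^ 2) + β

/-- Holt-type system dual to the second Hénon–Heiles system: the substitution is
canonical on `x̃ > 0`, and after the time change (division by `x̃^(2/3)`) the
Hamiltonian takes the Holt-type form. -/
theorem holt_dual_second_henon_heiles (α β : ℝ) (hα : α ≠ 0) :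
    (∀ xt yt pxt pyt : ℝ, 0 < xt → pb PX X xt yt pxt pyt = 1) ∧
    (∀ xt yt pxt pyt : ℝ, 0 < xt → pb (PY α) (Y α) xt yt pxt pyt = 1) ∧
    (∀ xt yt pxt pyt : ℝ, 0 < xt → pb PX (Y α) xt yt pxt pyt = 0) ∧
    (∀ xt yt pxt pyt : ℝ, 0 < xt → pb (PY α) X xt yt pxt pyt = 0) ∧
    (∀ xt yt pxt pyt : ℝ, 0 < xt → pb X (Y α) xt yt pxt pyt = 0) ∧
    (∀ xt yt pxt pyt : ℝ, 0 < xt → pb PX (PY α) xt yt pxt pyt = 0) ∧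
    (∀ xt yt pxt pyt : ℝ, 0 < xt →
      xt ^ (-(2 : ℝ) / 3) *
          Ham α β (X xt yt pxt pyt) (Y α xt yt pxt pyt)
            (PX xt yt pxt pyt) (PY α xt yt pxt pyt) =
        (1 / 2) * (pxt ^ 2 + pyt ^ 2)
          + (3 * α ^ 2 / 4) * xt ^ (-(2 : ℝ) / 3) * ((9 / 2) * xt ^ 2 + yt ^ 2)
          + β * xt ^ (-(2 : ℝ) / 3)) := by
  have hs : Real.sqrt (3 / 2) * Real.sqrt (2 / 3) = 1 := by
    rw [← Real.sqrt_mul (by norm_num)]; norm_num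
  have h1 : Real.sqrt (3 / 2) ^ 2 = 3 / 2 := Real.sq_sqrt (by norm_num)
  have h2 : Real.sqrt (2 / 3) ^ 2 = 2 / 3 := Real.sq_sqrt (by norm_num)
  refine ⟨?_, ?_, ?_, ?_, ?_, ?_, ?_⟩
  · intro x y p q hx
    have e1 : deriv (fun s : ℝ => (3 / 2) * s ^ ((2 : ℝ) / 3)) x
        = (3 / 2) * ((2 / 3) * x ^ ((2 : ℝ) / 3 - 1)) :=
      ((Real.hasDerivAt_rpow_const (Or.inl hx.ne')).const_mul _).deriv
    have e2 : deriv (fun s : ℝ => s * x ^ ((1 : ℝ) / 3)) p = x ^ ((1 : ℝ) / 3) := by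
      simpa using ((hasDerivAt_id p).mul_const (x ^ ((1 : ℝ) / 3))).deriv
    have e3 : x ^ ((1 : ℝ) / 3) * x ^ ((2 : ℝ) / 3 - 1) = 1 := by
      rw [← Real.rpow_add hx]; norm_num
    simp only [pb, PX, X, e1, e2, deriv_const]
    linear_combination e3
  · intro x y p q hx
    have e1 : deriv (fun s : ℝ => Real.sqrt (2 / 3) * s / α) q = Real.sqrt (2 / 3) / α := by
      simpa using (((hasDerivAt_id q).const_mul (Real.sqrt (2 / 3))).div_const α).deriv
    have e2 : deriv (fun s : ℝ => -(Real.sqrt (3 / 2) * α * s)) y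
        = -(Real.sqrt (3 / 2) * α) := by
      simpa using (((hasDerivAt_id y).const_mul (Real.sqrt (3 / 2) * α)).neg).deriv
    simp only [pb, PY, Y, e1, e2, deriv_const]
    have e3 : α * (1 / α) = 1 := by field_simp
    linear_combination hs + Real.sqrt (3 / 2) * Real.sqrt (2 / 3) * e3
  · intro x y p q hx
    simp only [pb, PX, Y, deriv_const]; ring
  · intro x y p q hx
    simp only [pb, PY, X, deriv_const]; ring
  · intro x y p q hx
    simp only [pb, X, Y, deriv_const]; ring
  · intro x y p q hx
    simp only [pb, PX, PY, deriv_const]; ring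
  · intro x y p q hx
    obtain ⟨t, ht, rfl⟩ : ∃ t : ℝ, 0 < t ∧ t ^ 3 = x :=
      ⟨x ^ ((1 : ℝ) / 3), by positivity, by
        rw [← Real.rpow_natCast, ← Real.rpow_mul hx.le]; norm_num⟩
    have a1 : (t ^ 3) ^ ((1 : ℝ) / 3) = t := by
      rw [← Real.rpow_natCast, ← Real.rpow_mul ht.le]; norm_num
    have a2 : (t ^ 3) ^ ((2 : ℝ) / 3) = t ^ 2 := by
      rw [← Real.rpow_natCast, ← Real.rpow_mul ht.le, ← Real.rpow_natCast]; norm_num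
    have a3 : (t ^ 3) ^ (-(2 : ℝ) / 3) = (t ^ 2)⁻¹ := by
      rw [neg_div, Real.rpow_neg hx.le, a2]
    simp only [Ham, X, Y, PX, PY, a1, a2, a3, neg_sq, mul_pow, div_pow, h1, h2]
    field_simp
    ring
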